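/- arXiv:math-ph/0603028 — 3 statements merged into one kernel-verified Lean document; each statement's English description precedes it below -/
import Mathlib

section
/- Let (ρ,C) be local Lie algebroid data on ℝ^n with fiber ℝ^m, let L : ℝ^n × ℝ^m → ℝ be C², and let (x,y) : [t₀,t₁] → ℝ^n × ℝ^m be an admissible C¹ curve. Then the following are equivalent: (a) for every C¹ map σ : [t₀,t₁] → ℝ^m with σ(t₀) = 0 and σ(t₁) = 0 one has ∫_{t₀}^{t₁} [ Σ_{i,α} ∂L/∂x^i(x(t),y(t)) ρ^i_α(x(t)) σ^α(t) + Σ_α ∂L/∂y^α(x(t),y(t)) ( (σ^α)'(t) + Σ_{β,γ} C^α_{βγ}(x(t)) y^β(t) σ^γ(t) ) ] dt = 0; (b) (x,y) is a solution of Lagrange's equations, i.e. EL_α(t) = 0 for every α and every t ∈ [t₀,t₁]. (This is the local-coordinate form of the theorem that the critical points of the action functional S = ∫ L, with respect to all admissible variations δx^i = Σ_α ρ^i_α σ^α, δy^α = (σ^α)' + Σ_{β,γ} C^α_{βγ} y^β σ^γ with σ vanishing at the endpoints, are exactly the solutions of Lagrange's equations on the Lie algebroid.) -/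
/-!
Along the curve, the product rule and the antisymmetry of `C` turn the integrand of the first
variation into `d/dt (Σ_α ∂L/∂y^α σ^α) - Σ_α EL_α σ^α`. Since `σ` vanishes at the endpoints, the
total derivative integrates to zero, so the first variation is `-∫ Σ_α EL_α σ^α`. The fundamental
lemma of the calculus of variations, applied to the continuous functions `EL_α`, concludes.
-/

open Set

/-- Partial derivative of a scalar function on `ℝ^n` in the `j`-th coordinate direction. -/
noncomputable def pderiv' {n : ℕ} (f : (Fin n → ℝ) → ℝ) (x : Fin n → ℝ) (j : Fin n) : ℝ :=
  deriv (fun s => f (Function.update x j s)) (x j)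

/-- Local Lie algebroid data on `ℝ^n` with fiber `ℝ^m`: smooth anchor coefficients
`ρ^i_α` and smooth structure functions `C^α_{βγ}`, antisymmetric in the lower indices. -/
structure LocalAlgebroidData (n m : ℕ) where
  ρ : (Fin n → ℝ) → Fin n → Fin m → ℝ
  C : (Fin n → ℝ) → Fin m → Fin m → Fin m → ℝ
  smooth_ρ : ContDiff ℝ (⊤ : ℕ∞) ρ
  smooth_C : ContDiff ℝ (⊤ : ℕ∞) C
  antisymm : ∀ x α β γ, C x α β γ = - C x α γ β

/-- Partial derivative `∂L/∂x^i` of a Lagrangian `L : ℝ^n × ℝ^m → ℝ`. -/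
noncomputable def pLx {n m : ℕ} (L : (Fin n → ℝ) × (Fin m → ℝ) → ℝ)
    (x : Fin n → ℝ) (y : Fin m → ℝ) (i : Fin n) : ℝ :=
  pderiv' (fun z => L (z, y)) x i

/-- Partial derivative `∂L/∂y^α` of a Lagrangian `L : ℝ^n × ℝ^m → ℝ`. -/
noncomputable def pLy {n m : ℕ} (L : (Fin n → ℝ) × (Fin m → ℝ) → ℝ)
    (x : Fin n → ℝ) (y : Fin m → ℝ) (α : Fin m) : ℝ :=
  pderiv' (fun w => L (x, w)) y α

/-- The Euler–Lagrange expression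
`EL_α(t) = d/dt[∂L/∂y^α] + Σ_{β,γ} C^γ_{αβ} y^β ∂L/∂y^γ − Σ_i ρ^i_α ∂L/∂x^i`
of a curve `(x,y)`. -/
noncomputable def ELexpr {n m : ℕ} (A : LocalAlgebroidData n m)
    (L : (Fin n → ℝ) × (Fin m → ℝ) → ℝ)
    (x : ℝ → Fin n → ℝ) (y : ℝ → Fin m → ℝ) (α : Fin m) (t : ℝ) : ℝ :=
  deriv (fun s => pLy L (x s) (y s) α) t
    + ∑ β, ∑ γ, A.C (x t) γ α β * y t β * pLy L (x t) (y t) γ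
    - ∑ i, A.ρ (x t) i α * pLx L (x t) (y t) i

open MeasureTheory
open scoped ContDiff

section FundamentalLemma

variable {a b : ℝ}

theorem eqOn_zero_Icc_of_integral_contDiff_smul_eq_zero {F : Type*} [NormedAddCommGroup F]
    [NormedSpace ℝ F] [CompleteSpace F] {f : ℝ → F} (hab : a < b) (hf : ContinuousOn f (Icc a b))
    (h : ∀ g : ℝ → ℝ, ContDiff ℝ ∞ g → tsupport g ⊆ Ioo a b → ∫ t in a..b, g t • f t = 0) :
    EqOn f 0 (Icc a b) := by
  have hloc : LocallyIntegrableOn f (Ioo a b) :=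
    (hf.mono Ioo_subset_Icc_self).locallyIntegrableOn measurableSet_Ioo
  have hIoo : ∀ᵐ t, t ∈ Ioo a b → f t = 0 := by
    refine isOpen_Ioo.ae_eq_zero_of_integral_contDiff_smul_eq_zero hloc fun g hg _ hgs ↦ ?_
    have hsupp : Function.support (fun t ↦ g t • f t) ⊆ Ioc a b :=
      (Function.support_smul_subset_left g f).trans <|
        (subset_tsupport g).trans <| hgs.trans Ioo_subset_Ioc_self
    rw [← intervalIntegral.integral_eq_integral_of_support_subset hsupp]
    exact h g hg hgs
  have hIcc : f =ᵐ[volume.restrict (Icc a b)] 0 := by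
    rw [← Measure.restrict_congr_set Ioo_ae_eq_Icc]
    exact (ae_restrict_iff' measurableSet_Ioo).2 hIoo
  exact Measure.eqOn_Icc_of_ae_eq volume hab.ne hIcc hf continuousOn_const

theorem forall_integral_sum_mul_eq_zero_iff {ι : Type*} [Fintype ι] {f : ι → ℝ → ℝ}
    (hab : a < b) (hf : ∀ i, ContinuousOn (f i) (Icc a b)) {k : ℕ∞ω} (hk : k ≤ ∞) :
    (∀ σ : ℝ → ι → ℝ, ContDiff ℝ k σ → σ a = 0 → σ b = 0 → ∫ t in a..b, ∑ i, f i t * σ t i = 0) ↔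
      ∀ i, ∀ t ∈ Icc a b, f i t = 0 := by
  classical
  refine ⟨fun h i ↦ eqOn_zero_Icc_of_integral_contDiff_smul_eq_zero hab (hf i)
    fun g hg hgs ↦ ?_, fun h σ _ _ _ ↦ ?_⟩
  · have hg_zero {t : ℝ} (ht : t ∉ Ioo a b) : g t = 0 :=
      image_eq_zero_of_notMem_tsupport (notMem_subset hgs ht)
    have hσ : ContDiff ℝ k fun t ↦ (Pi.single i (g t) : ι → ℝ) :=
      (contDiff_single (fun _ ↦ ℝ) k i).comp (hg.of_le hk)
    have hint := h _ hσ (by simp [hg_zero]) (by simp [hg_zero])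
    simpa [Pi.single_apply, mul_comm] using hint
  · refine intervalIntegral.integral_zero_ae (.of_forall fun t ht ↦ ?_)
    have htI : t ∈ Icc a b := Ioc_subset_Icc_self (uIoc_of_le hab.le ▸ ht)
    exact Finset.sum_eq_zero fun i _ ↦ by rw [h i t htI, zero_mul]

end FundamentalLemma

section PartialDerivatives

variable {n m : ℕ} {L : (Fin n → ℝ) × (Fin m → ℝ) → ℝ} {x : Fin n → ℝ} {y : Fin m → ℝ}
  {k l : ℕ∞ω}

theorem pderiv'_eq_of_hasFDerivAt {f : (Fin n → ℝ) → ℝ} {f' : (Fin n → ℝ) →L[ℝ] ℝ}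
    (hf : HasFDerivAt f f' x) (j : Fin n) : pderiv' f x j = f' (Pi.single j 1) := by
  rw [← Function.update_eq_self j x] at hf
  exact (hf.comp_hasDerivAt (x j) (hasDerivAt_update x j (x j))).deriv

theorem pLx_eq_fderiv (hL : DifferentiableAt ℝ L (x, y)) (i : Fin n) :
    pLx L x y i = fderiv ℝ L (x, y) (Pi.single i 1, 0) :=
  pderiv'_eq_of_hasFDerivAt (hL.hasFDerivAt.comp x (hasFDerivAt_prodMk_left x y)) i

theorem pLy_eq_fderiv (hL : DifferentiableAt ℝ L (x, y)) (α : Fin m) :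
    pLy L x y α = fderiv ℝ L (x, y) (0, Pi.single α 1) :=
  pderiv'_eq_of_hasFDerivAt (hL.hasFDerivAt.comp y (hasFDerivAt_prodMk_right x y)) α

theorem contDiff_pLx (hL : ContDiff ℝ l L) (hkl : k + 1 ≤ l) (i : Fin n) :
    ContDiff ℝ k fun q : (Fin n → ℝ) × (Fin m → ℝ) ↦ pLx L q.1 q.2 i := by
  have hL₁ : Differentiable ℝ L := (hL.of_le (le_add_self.trans hkl)).differentiable_one
  simp_rw [pLx_eq_fderiv (hL₁ _)]
  exact (hL.fderiv_right hkl).clm_apply contDiff_const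

theorem contDiff_pLy (hL : ContDiff ℝ l L) (hkl : k + 1 ≤ l) (α : Fin m) :
    ContDiff ℝ k fun q : (Fin n → ℝ) × (Fin m → ℝ) ↦ pLy L q.1 q.2 α := by
  have hL₁ : Differentiable ℝ L := (hL.of_le (le_add_self.trans hkl)).differentiable_one
  simp_rw [pLy_eq_fderiv (hL₁ _)]
  exact (hL.fderiv_right hkl).clm_apply contDiff_const

end PartialDerivatives

theorem sum_mul_sum_antisymm_eq_neg {ι R : Type*} [Fintype ι] [CommRing R] {c : ι → ι → ι → R}
    (hc : ∀ α β γ, c α β γ = -c α γ β) (p v s : ι → R) :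
    ∑ α, p α * ∑ β, ∑ γ, c α β γ * v β * s γ =
      -∑ α, (∑ β, ∑ γ, c γ α β * v β * p γ) * s α := by
  simp_rw [Finset.mul_sum, Finset.sum_mul, ← Finset.sum_neg_distrib]
  calc ∑ α, ∑ β, ∑ γ, p α * (c α β γ * v β * s γ)
      = ∑ α, ∑ γ, ∑ β, p α * (c α β γ * v β * s γ) :=
        Finset.sum_congr rfl fun _ _ ↦ Finset.sum_comm
    _ = ∑ γ, ∑ α, ∑ β, p α * (c α β γ * v β * s γ) := Finset.sum_comm
    _ = ∑ γ, ∑ β, ∑ α, p α * (c α β γ * v β * s γ) :=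
        Finset.sum_congr rfl fun _ _ ↦ Finset.sum_comm
    _ = ∑ γ, ∑ β, ∑ α, -(c α γ β * v β * p α * s γ) := by
        refine Fintype.sum_congr _ _ fun γ ↦ Fintype.sum_congr _ _ fun β ↦
          Fintype.sum_congr _ _ fun α ↦ ?_
        rw [hc α β γ]
        ring

section FirstVariation

variable {n m : ℕ} (A : LocalAlgebroidData n m) {L : (Fin n → ℝ) × (Fin m → ℝ) → ℝ}
  {x : ℝ → Fin n → ℝ} {y σ : ℝ → Fin m → ℝ}

/-- The variation `∂L/∂x^i δx^i + ∂L/∂y^α δy^α` at time `t` of the Lagrangian `L` along the curve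
`(x, y)`, for the admissible variation `δx^i = ρ^i_α σ^α`, `δy^α = (σ^α)' + C^α_{βγ} y^β σ^γ`
generated by `σ`. Its integral over the time interval is the first variation of the action. -/
noncomputable def lagrangianVariation (L : (Fin n → ℝ) × (Fin m → ℝ) → ℝ)
    (x : ℝ → Fin n → ℝ) (y σ : ℝ → Fin m → ℝ) (t : ℝ) : ℝ :=
  (∑ i, ∑ α, pLx L (x t) (y t) i * A.ρ (x t) i α * σ t α)
    + ∑ α, pLy L (x t) (y t) α *
        (deriv (fun s ↦ σ s α) t
          + ∑ β, ∑ γ, A.C (x t) α β γ * y t β * σ t γ)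

theorem lagrangianVariation_eq_deriv_sub {t : ℝ}
    (hp : ∀ α, DifferentiableAt ℝ (fun s ↦ pLy L (x s) (y s) α) t)
    (hσ : DifferentiableAt ℝ σ t) :
    lagrangianVariation A L x y σ t =
      deriv (fun s ↦ ∑ α, pLy L (x s) (y s) α * σ s α) t - ∑ α, ELexpr A L x y α t * σ t α := by
  have product_rule : deriv (fun s ↦ ∑ α, pLy L (x s) (y s) α * σ s α) t =
      ∑ α, (deriv (fun s ↦ pLy L (x s) (y s) α) t * σ t α +
        pLy L (x t) (y t) α * deriv (fun s ↦ σ s α) t) :=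
    (HasDerivAt.fun_sum fun α _ ↦
      (hp α).hasDerivAt.mul (differentiableAt_pi.1 hσ α).hasDerivAt).deriv
  have anchor_term : ∑ i, ∑ α, pLx L (x t) (y t) i * A.ρ (x t) i α * σ t α =
      ∑ α, (∑ i, A.ρ (x t) i α * pLx L (x t) (y t) i) * σ t α := by
    rw [Finset.sum_comm]
    simp_rw [Finset.sum_mul, mul_comm (pLx _ _ _ _)]
  simp only [lagrangianVariation, ELexpr, product_rule, anchor_term, mul_add, sub_mul, add_mul,
    Finset.sum_add_distrib, Finset.sum_sub_distrib,
    sum_mul_sum_antisymm_eq_neg (A.antisymm (x t))]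
  ring

theorem contDiff_pLy_comp (hL : ContDiff ℝ 2 L) (hx : ContDiff ℝ 1 x) (hy : ContDiff ℝ 1 y)
    (α : Fin m) : ContDiff ℝ 1 fun t ↦ pLy L (x t) (y t) α :=
  (contDiff_pLy hL one_add_one_eq_two.le α).comp (hx.prodMk hy)

theorem continuous_ELexpr (hL : ContDiff ℝ 2 L) (hx : ContDiff ℝ 1 x) (hy : ContDiff ℝ 1 y)
    (α : Fin m) : Continuous (ELexpr A L x y α) := by
  have hp (γ : Fin m) : Continuous fun t ↦ pLy L (x t) (y t) γ :=
    (contDiff_pLy_comp hL hx hy γ).continuous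
  have hp' : Continuous (deriv fun t ↦ pLy L (x t) (y t) α) :=
    (contDiff_pLy_comp hL hx hy α).continuous_deriv_one
  have hq (i : Fin n) : Continuous fun t ↦ pLx L (x t) (y t) i :=
    ((contDiff_pLx hL one_add_one_eq_two.le i).comp (hx.prodMk hy)).continuous
  have hρ : Continuous fun t ↦ A.ρ (x t) := A.smooth_ρ.continuous.comp hx.continuous
  have hC : Continuous fun t ↦ A.C (x t) := A.smooth_C.continuous.comp hx.continuous
  have hy₀ : Continuous y := hy.continuous
  unfold ELexpr
  fun_prop

theorem integral_lagrangianVariation (hL : ContDiff ℝ 2 L) (hx : ContDiff ℝ 1 x)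
    (hy : ContDiff ℝ 1 y) {t₀ t₁ : ℝ} (hσ : ContDiff ℝ 1 σ) (h₀ : σ t₀ = 0) (h₁ : σ t₁ = 0) :
    ∫ t in t₀..t₁, lagrangianVariation A L x y σ t =
      -∫ t in t₀..t₁, ∑ α, ELexpr A L x y α t * σ t α := by
  have hp := contDiff_pLy_comp hL hx hy
  have hpσ : ContDiff ℝ 1 fun t ↦ ∑ α, pLy L (x t) (y t) α * σ t α :=
    ContDiff.sum fun α _ ↦ (hp α).mul (contDiff_pi.1 hσ α)
  have hELσ : Continuous fun t ↦ ∑ α, ELexpr A L x y α t * σ t α :=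
    continuous_finsetSum _ fun α _ ↦
      (continuous_ELexpr A hL hx hy α).mul (contDiff_pi.1 hσ α).continuous
  have hpσ' := hpσ.continuous_deriv_one.intervalIntegrable (μ := volume) t₀ t₁
  have boundary : ∫ t in t₀..t₁, deriv (fun s ↦ ∑ α, pLy L (x s) (y s) α * σ s α) t = 0 := by
    rw [intervalIntegral.integral_deriv_eq_sub (fun t _ ↦ hpσ.differentiable_one t) hpσ']
    simp [h₀, h₁]
  simp_rw [lagrangianVariation_eq_deriv_sub A (fun α ↦ (hp α).differentiable_one _)
    (hσ.differentiable_one _)]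
  rw [intervalIntegral.integral_sub hpσ' (hELσ.intervalIntegrable _ _), boundary, zero_sub]

end FirstVariation

theorem variational_characterization_of_lagrange_equations_general
    {n m : ℕ} (A : LocalAlgebroidData n m) {L : (Fin n → ℝ) × (Fin m → ℝ) → ℝ}
    (hL : ContDiff ℝ 2 L) {x : ℝ → Fin n → ℝ} {y : ℝ → Fin m → ℝ} (hx : ContDiff ℝ 1 x)
    (hy : ContDiff ℝ 1 y) {t₀ t₁ : ℝ} (ht : t₀ < t₁) {k : ℕ∞ω} (hk : 1 ≤ k) (hk' : k ≤ ∞) :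
    (∀ σ : ℝ → Fin m → ℝ, ContDiff ℝ k σ → σ t₀ = 0 → σ t₁ = 0 →
      ∫ t in t₀..t₁, lagrangianVariation A L x y σ t = 0) ↔
      ∀ α, ∀ t ∈ Icc t₀ t₁, ELexpr A L x y α t = 0 := by
  rw [← forall_integral_sum_mul_eq_zero_iff ht
    (fun α ↦ (continuous_ELexpr A hL hx hy α).continuousOn) hk']
  refine forall₄_congr fun σ hσ h₀ h₁ ↦ ?_
  rw [integral_lagrangianVariation A hL hx hy (hσ.of_le hk) h₀ h₁, neg_eq_zero]

/-- **Variational characterization of Lagrange's equations on a Lie algebroid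
(local coordinate form).**  For an admissible C¹ curve `(x,y)` and a C² Lagrangian `L`,
the first variation of the action `∫ L` vanishes for all admissible variations
`δx^i = Σ_α ρ^i_α σ^α`, `δy^α = (σ^α)' + Σ_{β,γ} C^α_{βγ} y^β σ^γ` with `σ` vanishing at
the endpoints, if and only if `(x,y)` is a solution of Lagrange's equations. -/
theorem variational_characterization_of_lagrange_equations
    {n m : ℕ} (A : LocalAlgebroidData n m)
    (L : (Fin n → ℝ) × (Fin m → ℝ) → ℝ) (hL : ContDiff ℝ 2 L)
    (t₀ t₁ : ℝ) (ht : t₀ < t₁)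
    (x : ℝ → Fin n → ℝ) (y : ℝ → Fin m → ℝ)
    (hx : ContDiff ℝ 1 x) (hy : ContDiff ℝ 1 y)
    (hadm : ∀ t ∈ Icc t₀ t₁, ∀ i,
      deriv (fun s => x s i) t = ∑ α, A.ρ (x t) i α * y t α) :
    (∀ σ : ℝ → Fin m → ℝ, ContDiff ℝ 1 σ → σ t₀ = 0 → σ t₁ = 0 →
      ∫ t in t₀..t₁,
        ((∑ i, ∑ α, pLx L (x t) (y t) i * A.ρ (x t) i α * σ t α)
          + ∑ α, pLy L (x t) (y t) α *
              (deriv (fun s => σ s α) t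
                + ∑ β, ∑ γ, A.C (x t) α β γ * y t β * σ t γ)) = 0)
    ↔ (∀ α, ∀ t ∈ Icc t₀ t₁, ELexpr A L x y α t = 0) :=
  variational_characterization_of_lagrange_equations_general A hL hx hy ht le_rfl (by simp)
end

section
/- Reduction theorem (coordinate form): Let (φ,Φ) be a local morphism from the local Lie algebroid data (ρ,C) on ℝ^n with fiber ℝ^m to the local Lie algebroid data (ρ',C') on ℝ^{n'} with fiber ℝ^{m'}, and assume the morphism is fiberwise surjective, i.e. for every x ∈ ℝ^n the linear map ℝ^m → ℝ^{m'}, y ↦ Φ(x)y, is surjective. Let L' : ℝ^{n'} × ℝ^{m'} → ℝ be C² and L(x,y) := L'(φ(x), Φ(x)y). If an admissible C¹ curve (x,y) : [t₀,t₁] → ℝ^n × ℝ^m is a solution of Lagrange's equations for L, then the admissible curve (φ ∘ x, t ↦ Φ(x(t)) y(t)) is a solution of Lagrange's equations for L'. -/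
/-!
The left-hand side of Lagrange's equations is a covector: pairing it with `v : ℝ^m` gives
`δL(v) = d/dt ⟨∂L/∂y, v⟩ + ⟨∂L/∂y, [v, y]⟩ - ⟨∂L/∂x, ρ v⟩`. Let `L = L' ∘ (φ, Φ)` and
`P = ∂L'/∂y`. Since `⟨∂L/∂y, v⟩ = ⟨P, Φ v⟩`, differentiating along an admissible curve contributes
`⟨P, DΦ(ρ y) v⟩`, while the chain rule in `x` contributes `⟨P, DΦ(ρ v) y⟩`. The morphism condition
`DΦ(ρ y) v - DΦ(ρ v) y + Φ[v, y] = [Φ v, Φ y]'` absorbs both, and `Dφ ∘ ρ = ρ' ∘ Φ` takes care of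
the rest, so that `δL(v) = δL'(Φ v)`. When `Φ` is onto, `δL` and `δL'` vanish together.
-/

open Set

/-- The curve `(x,y)` is admissible on `[t₀,t₁]`: `(x^i)' = Σ_α ρ^i_α(x) y^α`. -/
def IsAdmissible {n m : ℕ} (A : LocalAlgebroidData n m) (t₀ t₁ : ℝ)
    (x : ℝ → Fin n → ℝ) (y : ℝ → Fin m → ℝ) : Prop :=
  ∀ t ∈ Icc t₀ t₁, ∀ i, deriv (fun s => x s i) t = ∑ α, A.ρ (x t) i α * y t α

/-- `(x,y)` is a solution of Lagrange's equations for `L` on `[t₀,t₁]`. -/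
def IsLagrangeSolution {n m : ℕ} (A : LocalAlgebroidData n m)
    (L : (Fin n → ℝ) × (Fin m → ℝ) → ℝ) (t₀ t₁ : ℝ)
    (x : ℝ → Fin n → ℝ) (y : ℝ → Fin m → ℝ) : Prop :=
  ∀ α, ∀ t ∈ Icc t₀ t₁,
    deriv (fun s => pLy L (x s) (y s) α) t
        + ∑ β, ∑ γ, A.C (x t) γ α β * y t β * pLy L (x t) (y t) γ
      = ∑ i, A.ρ (x t) i α * pLx L (x t) (y t) i

/-- A local morphism of local Lie algebroid data: a pair of smooth maps `(φ, Φ)`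
satisfying the admissibility and morphism conditions. -/
structure LocalMorphism {n m n' m' : ℕ}
    (A : LocalAlgebroidData n m) (A' : LocalAlgebroidData n' m') where
  φ : (Fin n → ℝ) → Fin n' → ℝ
  Φ : (Fin n → ℝ) → Fin m' → Fin m → ℝ
  smooth_φ : ContDiff ℝ (⊤ : ℕ∞) φ
  smooth_Φ : ContDiff ℝ (⊤ : ℕ∞) Φ
  adm : ∀ x (k : Fin n') (α : Fin m),
    ∑ i, pderiv' (fun z => φ z k) x i * A.ρ x i α
      = ∑ β, A'.ρ (φ x) k β * Φ x β α
  morph : ∀ x (α : Fin m') (μ ν : Fin m),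
    (∑ i, (A.ρ x i ν * pderiv' (fun z => Φ z α μ) x i
            - A.ρ x i μ * pderiv' (fun z => Φ z α ν) x i))
      + (∑ β, Φ x α β * A.C x β μ ν)
      - (∑ β, ∑ γ, A'.C (φ x) α β γ * Φ x β μ * Φ x γ ν) = 0

theorem differentiableAt_fderiv_comp {E F : Type*} [NormedAddCommGroup E] [NormedSpace ℝ E]
    [NormedAddCommGroup F] [NormedSpace ℝ F] {f : E → F} (hf : ContDiff ℝ 2 f) {c : ℝ → E} {t : ℝ}
    (hc : DifferentiableAt ℝ c t) :
    DifferentiableAt ℝ (fun s => fderiv ℝ f (c s)) t :=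
  ((hf.fderiv_right (m := 1) (by norm_num)).differentiable one_ne_zero (c t)).comp t hc

section PartialDerivatives

variable {n m : ℕ}

theorem pderiv'_eq_fderiv {f : (Fin n → ℝ) → ℝ} {x : Fin n → ℝ} (hf : DifferentiableAt ℝ f x)
    (j : Fin n) : pderiv' f x j = fderiv ℝ f x (Pi.single j 1) := by
  have hf' : HasFDerivAt f (fderiv ℝ f x) (Function.update x j (x j)) := by
    simpa using hf.hasFDerivAt
  exact (hf'.comp_hasDerivAt (x j) (hasDerivAt_update x j (x j))).deriv

theorem sum_pderiv'_mul {f : (Fin n → ℝ) → ℝ} {x : Fin n → ℝ} (hf : DifferentiableAt ℝ f x)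
    (v : Fin n → ℝ) : ∑ j, pderiv' f x j * v j = fderiv ℝ f x v := by
  conv_rhs => rw [pi_eq_sum_univ' v]
  simp [pderiv'_eq_fderiv hf, mul_comm]

theorem sum_pderiv'_apply_mul {g : (Fin n → ℝ) → Fin m → ℝ} {x : Fin n → ℝ}
    (hg : DifferentiableAt ℝ g x) (v : Fin n → ℝ) (k : Fin m) :
    ∑ j, pderiv' (fun z => g z k) x j * v j = fderiv ℝ g x v k := by
  have h := hasFDerivAt_pi'.1 hg.hasFDerivAt k
  rw [sum_pderiv'_mul h.differentiableAt, h.fderiv]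
  rfl

variable {L : (Fin n → ℝ) × (Fin m → ℝ) → ℝ} {x : Fin n → ℝ} {y : Fin m → ℝ}

theorem sum_pLx_mul (hL : DifferentiableAt ℝ L (x, y)) (u : Fin n → ℝ) :
    ∑ i, pLx L x y i * u i = fderiv ℝ L (x, y) (u, 0) := by
  have h : HasFDerivAt (fun z => L (z, y)) ((fderiv ℝ L (x, y)).comp (.inl ℝ _ _)) x :=
    hL.hasFDerivAt.comp x (hasFDerivAt_prodMk_left x y)
  have h' := sum_pderiv'_mul h.differentiableAt u
  rw [h.fderiv] at h'
  exact h'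

theorem sum_pLy_mul (hL : DifferentiableAt ℝ L (x, y)) (v : Fin m → ℝ) :
    ∑ α, pLy L x y α * v α = fderiv ℝ L (x, y) (0, v) := by
  have h : HasFDerivAt (fun w => L (x, w)) ((fderiv ℝ L (x, y)).comp (.inr ℝ _ _)) y :=
    hL.hasFDerivAt.comp y (hasFDerivAt_prodMk_right x y)
  have h' := sum_pderiv'_mul h.differentiableAt v
  rw [h.fderiv] at h'
  exact h'

end PartialDerivatives

namespace LocalAlgebroidData

variable {n m : ℕ} (A : LocalAlgebroidData n m)

/-- The anchor `v ↦ ρ(x) v` of the algebroid at `x`, as a linear map. -/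
noncomputable def anchor (x : Fin n → ℝ) : (Fin m → ℝ) →ₗ[ℝ] (Fin n → ℝ) :=
  Matrix.mulVecLin (.of (A.ρ x))

/-- The bracket `[v, w]^γ = C^γ_{αβ}(x) v^α w^β` of the constant sections `v` and `w` at `x`, as a
bilinear map. -/
noncomputable def bracket (x : Fin n → ℝ) :
    (Fin m → ℝ) →ₗ[ℝ] (Fin m → ℝ) →ₗ[ℝ] (Fin m → ℝ) :=
  Fintype.linearCombination ℝ fun α => Matrix.mulVecLin (.of fun γ β => A.C x γ α β)

theorem anchor_apply (x : Fin n → ℝ) (v : Fin m → ℝ) (i : Fin n) :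
    A.anchor x v i = ∑ α, A.ρ x i α * v α := rfl

theorem bracket_apply (x : Fin n → ℝ) (v w : Fin m → ℝ) (γ : Fin m) :
    A.bracket x v w γ = ∑ α, ∑ β, A.C x γ α β * v α * w β := by
  simp [bracket, Fintype.linearCombination_apply, Matrix.mulVec, dotProduct, Finset.mul_sum,
    mul_assoc, mul_left_comm]

end LocalAlgebroidData

theorem IsAdmissible.hasDerivAt {n m : ℕ} {A : LocalAlgebroidData n m} {t₀ t₁ t : ℝ}
    {x : ℝ → Fin n → ℝ} {y : ℝ → Fin m → ℝ} (hadm : IsAdmissible A t₀ t₁ x y)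
    (ht : t ∈ Icc t₀ t₁) (hx : DifferentiableAt ℝ x t) :
    HasDerivAt x (A.anchor (x t) (y t)) t := by
  refine hasDerivAt_pi.2 fun i => ?_
  rw [A.anchor_apply, ← hadm t ht i]
  exact (differentiableAt_pi.1 hx i).hasDerivAt

section EulerLagrangeForm

variable {n m : ℕ} {A : LocalAlgebroidData n m} {L : (Fin n → ℝ) × (Fin m → ℝ) → ℝ}
  {x : ℝ → Fin n → ℝ} {y : ℝ → Fin m → ℝ} {t : ℝ}

/-- The Euler–Lagrange covector of the curve `(x, y)` at time `t`, paired with `v`. The components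
`ELexpr` are its values on the standard basis, see `eulerLagrangeForm_eq_sum`. -/
noncomputable def eulerLagrangeForm (A : LocalAlgebroidData n m)
    (L : (Fin n → ℝ) × (Fin m → ℝ) → ℝ) (x : ℝ → Fin n → ℝ) (y : ℝ → Fin m → ℝ) (t : ℝ)
    (v : Fin m → ℝ) : ℝ :=
  deriv (fun s => fderiv ℝ L (x s, y s) (0, v)) t
    + fderiv ℝ L (x t, y t) (0, A.bracket (x t) v (y t))
    - fderiv ℝ L (x t, y t) (A.anchor (x t) v, 0)

theorem eulerLagrangeForm_eq_sum (hL : ContDiff ℝ 2 L) (hx : DifferentiableAt ℝ x t)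
    (hy : DifferentiableAt ℝ y t) (v : Fin m → ℝ) :
    eulerLagrangeForm A L x y t v = ∑ α, ELexpr A L x y α t * v α := by
  have hL₁ : Differentiable ℝ L := hL.differentiable (by norm_num)
  have hp (α : Fin m) : DifferentiableAt ℝ (fun s => pLy L (x s) (y s) α) t := by
    have h := (differentiableAt_fderiv_comp hL (hx.prodMk hy)).clm_apply
      (differentiableAt_const ((0 : Fin n → ℝ), Pi.single α (1 : ℝ)))
    simpa [← sum_pLy_mul (hL₁ _), Pi.single_apply] using h
  have hderiv : deriv (fun s => fderiv ℝ L (x s, y s) (0, v)) t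
      = ∑ α, deriv (fun s => pLy L (x s) (y s) α) t * v α := by
    simp only [← sum_pLy_mul (hL₁ _)]
    exact (HasDerivAt.fun_sum fun α _ => (hp α).hasDerivAt.mul_const (v α)).deriv
  have hbracket : fderiv ℝ L (x t, y t) (0, A.bracket (x t) v (y t))
      = ∑ α, (∑ β, ∑ γ, A.C (x t) γ α β * y t β * pLy L (x t) (y t) γ) * v α := by
    simp only [← sum_pLy_mul (hL₁ _), A.bracket_apply, Finset.mul_sum, Finset.sum_mul]
    rw [Finset.sum_comm]
    refine Finset.sum_congr rfl fun α _ => ?_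
    rw [Finset.sum_comm]
    exact Finset.sum_congr rfl fun β _ => Finset.sum_congr rfl fun γ _ => by ring
  have hanchor : fderiv ℝ L (x t, y t) (A.anchor (x t) v, 0)
      = ∑ α, (∑ i, A.ρ (x t) i α * pLx L (x t) (y t) i) * v α := by
    simp only [← sum_pLx_mul (hL₁ _), A.anchor_apply, Finset.mul_sum, Finset.sum_mul]
    rw [Finset.sum_comm]
    exact Finset.sum_congr rfl fun α _ => Finset.sum_congr rfl fun i _ => by ring
  rw [eulerLagrangeForm, hderiv, hbracket, hanchor, ← Finset.sum_add_distrib,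
    ← Finset.sum_sub_distrib]
  simp only [ELexpr, add_mul, sub_mul]

theorem isLagrangeSolution_iff_eulerLagrangeForm_eq_zero {t₀ t₁ : ℝ} (hL : ContDiff ℝ 2 L)
    (hx : ∀ t ∈ Icc t₀ t₁, DifferentiableAt ℝ x t)
    (hy : ∀ t ∈ Icc t₀ t₁, DifferentiableAt ℝ y t) :
    IsLagrangeSolution A L t₀ t₁ x y
      ↔ ∀ t ∈ Icc t₀ t₁, ∀ v, eulerLagrangeForm A L x y t v = 0 := by
  have hEL : IsLagrangeSolution A L t₀ t₁ x y
      ↔ ∀ α, ∀ t ∈ Icc t₀ t₁, ELexpr A L x y α t = 0 := by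
    simp only [IsLagrangeSolution, ELexpr, sub_eq_zero]
  rw [hEL]
  refine ⟨fun h t ht v => ?_, fun h α t ht => ?_⟩
  · simp [eulerLagrangeForm_eq_sum hL (hx t ht) (hy t ht), h _ t ht]
  · simpa [eulerLagrangeForm_eq_sum hL (hx t ht) (hy t ht), Pi.single_apply]
      using h t ht (Pi.single α 1)

end EulerLagrangeForm

namespace LocalMorphism

variable {n m n' m' : ℕ} {A : LocalAlgebroidData n m} {A' : LocalAlgebroidData n' m'}
  (F : LocalMorphism A A')

/-- The linear map `y ↦ Φ(x) y` between the fibers over `x` and `φ x`. -/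
noncomputable def fiberMap (x : Fin n → ℝ) : (Fin m → ℝ) →L[ℝ] (Fin m' → ℝ) :=
  LinearMap.toContinuousLinearMap (Matrix.mulVecLin (.of (F.Φ x)))

/-- The bundle map `(x, y) ↦ (φ x, Φ(x) y)` on total spaces. -/
noncomputable def totalMap (p : (Fin n → ℝ) × (Fin m → ℝ)) : (Fin n' → ℝ) × (Fin m' → ℝ) :=
  (F.φ p.1, F.fiberMap p.1 p.2)

theorem fiberMap_apply (x : Fin n → ℝ) (v : Fin m → ℝ) (β : Fin m') :
    F.fiberMap x v β = ∑ α, F.Φ x β α * v α := rfl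

theorem contDiff_Φ_apply (β : Fin m') (α : Fin m) :
    ContDiff ℝ (⊤ : ℕ∞) fun x => F.Φ x β α :=
  contDiff_pi.1 (contDiff_pi.1 F.smooth_Φ β) α

theorem contDiff_fiberMap : ContDiff ℝ (⊤ : ℕ∞) F.fiberMap :=
  contDiff_clm_apply_iff.2 fun v => contDiff_pi.2 fun β => by
    simp only [fiberMap_apply]
    exact ContDiff.sum fun α _ => (F.contDiff_Φ_apply β α).mul contDiff_const

theorem contDiff_totalMap : ContDiff ℝ (⊤ : ℕ∞) F.totalMap :=
  (F.smooth_φ.comp contDiff_fst).prodMk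
    ((F.contDiff_fiberMap.comp contDiff_fst).clm_apply contDiff_snd)

theorem differentiable_φ : Differentiable ℝ F.φ := F.smooth_φ.differentiable (by simp)

theorem differentiable_fiberMap : Differentiable ℝ F.fiberMap :=
  F.contDiff_fiberMap.differentiable (by simp)

theorem fderiv_φ_anchor (x : Fin n → ℝ) (v : Fin m → ℝ) :
    fderiv ℝ F.φ x (A.anchor x v) = A'.anchor (F.φ x) (F.fiberMap x v) := by
  suffices h : (fderiv ℝ F.φ x).toLinearMap ∘ₗ A.anchor x
      = A'.anchor (F.φ x) ∘ₗ (F.fiberMap x).toLinearMap from LinearMap.congr_fun h v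
  ext α k
  simpa [A'.anchor_apply, fiberMap_apply, ← sum_pderiv'_apply_mul (F.differentiable_φ x),
    A.anchor_apply, Pi.single_apply] using F.adm x k α

theorem fderiv_fiberMap_single_apply (x u : Fin n → ℝ) (β : Fin m') (α : Fin m) :
    fderiv ℝ F.fiberMap x u (Pi.single α 1) β
      = ∑ i, pderiv' (fun z => F.Φ z β α) x i * u i := by
  have h : HasFDerivAt (fun z => F.fiberMap z (Pi.single α 1))
      ((fderiv ℝ F.fiberMap x).flip (Pi.single α 1)) x := by
    simpa using (F.differentiable_fiberMap x).hasFDerivAt.clm_apply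
      (hasFDerivAt_const (Pi.single α (1 : ℝ)) x)
  have hβ := sum_pderiv'_apply_mul h.differentiableAt u β
  rw [h.fderiv] at hβ
  simpa [fiberMap_apply, Pi.single_apply] using hβ.symm

theorem fderiv_fiberMap_anchor_add_bracket (x : Fin n → ℝ) (v w : Fin m → ℝ) :
    fderiv ℝ F.fiberMap x (A.anchor x w) v + F.fiberMap x (A.bracket x v w)
      = fderiv ℝ F.fiberMap x (A.anchor x v) w
        + A'.bracket (F.φ x) (F.fiberMap x v) (F.fiberMap x w) := by
  let D : (Fin m → ℝ) →ₗ[ℝ] (Fin m → ℝ) →ₗ[ℝ] (Fin m' → ℝ) :=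
    ContinuousLinearMap.coeLM ℝ ∘ₗ (fderiv ℝ F.fiberMap x).toLinearMap ∘ₗ A.anchor x
  let Φ := (F.fiberMap x).toLinearMap
  suffices h : D.flip + (A.bracket x).compr₂ Φ = D + (A'.bracket (F.φ x)).compl₁₂ Φ Φ from
    LinearMap.congr_fun₂ h v w
  ext μ ν β
  have h : ∑ i, pderiv' (fun z => F.Φ z β μ) x i * A.ρ x i ν + ∑ γ, F.Φ x β γ * A.C x γ μ ν
      = ∑ i, pderiv' (fun z => F.Φ z β ν) x i * A.ρ x i μ
        + ∑ δ, ∑ ε, A'.C (F.φ x) β δ ε * F.Φ x δ μ * F.Φ x ε ν := by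
    have hmorph := F.morph x β μ ν
    simp only [Finset.sum_sub_distrib, mul_comm (A.ρ x _ _)] at hmorph
    linarith
  simpa [D, Φ, fderiv_fiberMap_single_apply, A.anchor_apply, A.bracket_apply, A'.bracket_apply,
    fiberMap_apply, Pi.single_apply] using h

theorem fderiv_comp_totalMap {L' : (Fin n' → ℝ) × (Fin m' → ℝ) → ℝ} (hL' : Differentiable ℝ L')
    (x u : Fin n → ℝ) (y v : Fin m → ℝ) :
    fderiv ℝ (L' ∘ F.totalMap) (x, y) (u, v)
      = fderiv ℝ L' (F.φ x, F.fiberMap x y)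
          (fderiv ℝ F.φ x u, F.fiberMap x v + fderiv ℝ F.fiberMap x u y) := by
  have hφ : HasFDerivAt (fun p : (Fin n → ℝ) × (Fin m → ℝ) => F.φ p.1) _ (x, y) :=
    (F.differentiable_φ x).hasFDerivAt.comp (x, y) hasFDerivAt_fst
  have hΦ : HasFDerivAt (fun p : (Fin n → ℝ) × (Fin m → ℝ) => F.fiberMap p.1) _ (x, y) :=
    HasFDerivAt.comp (g := F.fiberMap) (x, y) (F.differentiable_fiberMap x).hasFDerivAt
      hasFDerivAt_fst
  have htotal := hφ.prodMk (hΦ.clm_apply hasFDerivAt_snd)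
  have h := (hL' (F.totalMap (x, y))).hasFDerivAt.comp (x, y) htotal
  rw [h.fderiv]
  rfl

theorem eulerLagrangeForm_comp_totalMap {L' : (Fin n' → ℝ) × (Fin m' → ℝ) → ℝ}
    (hL' : ContDiff ℝ 2 L') {x : ℝ → Fin n → ℝ} {y : ℝ → Fin m → ℝ} {t : ℝ}
    (hx : HasDerivAt x (A.anchor (x t) (y t)) t) (hy : DifferentiableAt ℝ y t)
    (v : Fin m → ℝ) :
    eulerLagrangeForm A (L' ∘ F.totalMap) x y t v
      = eulerLagrangeForm A' L' (fun s => F.φ (x s)) (fun s => F.fiberMap (x s) (y s)) t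
          (F.fiberMap (x t) v) := by
  have hL₁ : Differentiable ℝ L' := hL'.differentiable (by norm_num)
  have hΦ : HasDerivAt (fun s => F.fiberMap (x s)) _ t :=
    (F.differentiable_fiberMap (x t)).hasFDerivAt.comp_hasDerivAt t hx
  have hP := (differentiableAt_fderiv_comp hL'
    (((F.differentiable_φ (x t)).comp t hx.differentiableAt).prodMk
      (hΦ.differentiableAt.clm_apply hy))).hasDerivAt
  set P := fun s => fderiv ℝ L' (F.φ (x s), F.fiberMap (x s) (y s))
  have hderiv_pullback : deriv (fun s => P s (0, F.fiberMap (x s) v)) t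
      = deriv P t (0, F.fiberMap (x t) v)
        + P t (0, fderiv ℝ F.fiberMap (x t) (A.anchor (x t) (y t)) v) := by
    have h := hP.clm_apply ((hasDerivAt_const t (0 : Fin n' → ℝ)).prodMk
      (hΦ.clm_apply (hasDerivAt_const t v)))
    simpa using h.deriv
  have hderiv_const : deriv (fun s => P s (0, F.fiberMap (x t) v)) t
      = deriv P t (0, F.fiberMap (x t) v) := by
    simpa using (hP.clm_apply (hasDerivAt_const t _)).deriv
  have hsplit (u : Fin n' → ℝ) (w : Fin m' → ℝ) : P t (u, w) = P t (u, 0) + P t (0, w) := by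
    simp [← map_add]
  have hmorph := congrArg (P t ∘L .inr ℝ _ _) (F.fderiv_fiberMap_anchor_add_bracket (x t) v (y t))
  simp only [map_add, ContinuousLinearMap.comp_apply, ContinuousLinearMap.inr_apply] at hmorph
  simp only [eulerLagrangeForm, F.fderiv_comp_totalMap hL₁, F.fderiv_φ_anchor, map_zero,
    zero_apply, add_zero, zero_add]
  rw [hderiv_pullback, hderiv_const, hsplit (A'.anchor _ _)]
  linarith

end LocalMorphism

theorem reduction_of_lagrange_equations_general
    {n m n' m' : ℕ} {A : LocalAlgebroidData n m} {A' : LocalAlgebroidData n' m'}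
    (F : LocalMorphism A A') {L' : (Fin n' → ℝ) × (Fin m' → ℝ) → ℝ} (hL' : ContDiff ℝ 2 L')
    {t₀ t₁ : ℝ} {x : ℝ → Fin n → ℝ} {y : ℝ → Fin m → ℝ}
    (hsurj : ∀ t ∈ Icc t₀ t₁, Function.Surjective (F.fiberMap (x t)))
    (hx : ∀ t ∈ Icc t₀ t₁, DifferentiableAt ℝ x t)
    (hy : ∀ t ∈ Icc t₀ t₁, DifferentiableAt ℝ y t)
    (hadm : IsAdmissible A t₀ t₁ x y) :
    IsLagrangeSolution A (L' ∘ F.totalMap) t₀ t₁ x y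
      ↔ IsLagrangeSolution A' L' t₀ t₁ (fun t => F.φ (x t)) (fun t => F.fiberMap (x t) (y t)) := by
  have hL : ContDiff ℝ 2 (L' ∘ F.totalMap) :=
    hL'.comp (mod_cast contDiff_infty.1 F.contDiff_totalMap 2)
  have hφx (t) (ht : t ∈ Icc t₀ t₁) : DifferentiableAt ℝ (fun s => F.φ (x s)) t :=
    (F.differentiable_φ (x t)).comp t (hx t ht)
  have hΦy (t) (ht : t ∈ Icc t₀ t₁) : DifferentiableAt ℝ (fun s => F.fiberMap (x s) (y s)) t :=
    ((F.differentiable_fiberMap (x t)).comp t (hx t ht)).clm_apply (hy t ht)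
  rw [isLagrangeSolution_iff_eulerLagrangeForm_eq_zero hL hx hy,
    isLagrangeSolution_iff_eulerLagrangeForm_eq_zero hL' hφx hΦy]
  refine forall₂_congr fun t ht => ?_
  simp only [F.eulerLagrangeForm_comp_totalMap hL' (hadm.hasDerivAt ht (hx t ht)) (hy t ht)]
  exact (hsurj t ht).forall (p := fun w => eulerLagrangeForm A' L' _ _ t w = 0) |>.symm

/-- **Reduction theorem (coordinate form).**  Let `(φ,Φ)` be a fiberwise surjective
local morphism of Lie algebroid data and `L = L' ∘ (φ,Φ)`.  If an admissible C¹ curve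
`(x,y)` solves Lagrange's equations for `L`, then the image curve `(φ∘x, Φ(x)y)`
solves Lagrange's equations for `L'`. -/
theorem reduction_of_lagrange_equations
    {n m n' m' : ℕ} {A : LocalAlgebroidData n m} {A' : LocalAlgebroidData n' m'}
    (F : LocalMorphism A A')
    (hsurj : ∀ x : Fin n → ℝ,
      Function.Surjective (fun (y : Fin m → ℝ) (β : Fin m') => ∑ α, F.Φ x β α * y α))
    (L' : (Fin n' → ℝ) × (Fin m' → ℝ) → ℝ) (hL' : ContDiff ℝ 2 L')
    (t₀ t₁ : ℝ) (ht : t₀ < t₁)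
    (x : ℝ → Fin n → ℝ) (y : ℝ → Fin m → ℝ)
    (hx : ContDiff ℝ 1 x) (hy : ContDiff ℝ 1 y)
    (hadm : IsAdmissible A t₀ t₁ x y)
    (hsol : IsLagrangeSolution A
      (fun p => L' (F.φ p.1, fun β => ∑ δ, F.Φ p.1 β δ * p.2 δ)) t₀ t₁ x y) :
    IsLagrangeSolution A' L' t₀ t₁ (fun t => F.φ (x t))
      (fun t β => ∑ α, F.Φ (x t) β α * y t α) := by
  exact (reduction_of_lagrange_equations_general F hL' (fun t _ => hsurj (x t))
    (fun t _ => hx.differentiable one_ne_zero t) (fun t _ => hy.differentiable one_ne_zero t)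
    hadm).1 hsol
end

section
/- The spinning-top relative equilibrium admits no Lagrange multiplier on the sphere version of the heavy top: let I be a 3×3 real matrix, e ∈ ℝ³ with e ≠ 0, λ ∈ ℝ with λ ≠ 0 and I e = λ • e, and let ε ∈ {1, −1}. Then there exists no p ∈ ℝ³ such that p × (ε • e) = I e. (In other words, at the relative equilibrium γ = ±e, ω = e, the restriction p × γ = I ω imposed on normal solutions of the Lagrange multiplier method has no solution p, so this solution of the Euler–top equations is not obtained by the heuristic Lagrange multiplier method.) -/
open Matrix

theorem dot_cross_smul_self {R : Type*} [CommRing R] (v w : Fin 3 → R) (c : R) :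
    w ⬝ᵥ v ⨯₃ (c • w) = 0 := by
  rw [map_smul, dotProduct_smul, dot_cross_self, smul_zero]

theorem dotProduct_mulVec_ne_zero_of_mulVec_eq_smul {n R : Type*} [Fintype n]
    [CommRing R] [LinearOrder R] [IsStrictOrderedRing R]
    {A : Matrix n n R} {v : n → R} {μ : R} (hv : v ≠ 0) (hμ : μ ≠ 0) (h : A *ᵥ v = μ • v) :
    v ⬝ᵥ A *ᵥ v ≠ 0 := by
  rw [h, dotProduct_smul, smul_eq_mul]
  exact mul_ne_zero hμ (dotProduct_self_eq_zero.not.mpr hv)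

-- Over `ℝ`, `henergy` says that the rotational kinetic energy `(ω ⬝ᵥ I *ᵥ ω) / 2` does not vanish
-- at `ω = e`; a vector `p ⨯₃ (ε • e)` is orthogonal to `e` and would force it to vanish.
theorem spinning_top_no_multiplier_general {R : Type*} [CommRing R]
    (I : Matrix (Fin 3) (Fin 3) R) (e : Fin 3 → R) (henergy : e ⬝ᵥ I *ᵥ e ≠ 0) (ε : R) :
    ¬ ∃ p : Fin 3 → R, p ⨯₃ (ε • e) = I *ᵥ e := by
  rintro ⟨p, hp⟩
  exact henergy (hp ▸ dot_cross_smul_self p e ε)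

/-- **The spinning-top relative equilibrium admits no Lagrange multiplier on the
sphere version of the heavy top.**  If `e ≠ 0` is an eigenvector of the inertia
tensor `I` with nonzero eigenvalue `λ` and `ε = ±1`, then there is no `p ∈ ℝ³` with
`p × (ε • e) = I e`; i.e. at the relative equilibrium `γ = ±e`, `ω = e`, the
restriction `p × γ = I ω` on normal multiplier solutions has no solution. -/
theorem spinning_top_no_multiplier
    (I : Matrix (Fin 3) (Fin 3) ℝ) (e : Fin 3 → ℝ) (he : e ≠ 0)
    (lam : ℝ) (hlam : lam ≠ 0) (heig : I.mulVec e = lam • e)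
    (ε : ℝ) (hε : ε = 1 ∨ ε = -1) :
    ¬ ∃ p : Fin 3 → ℝ, crossProduct p (ε • e) = I.mulVec e :=
  spinning_top_no_multiplier_general I e
    (dotProduct_mulVec_ne_zero_of_mulVec_eq_smul he hlam heig) ε
end
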